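/- (Proposition 5, conserved quantity under the differential constraint.) Let ε = ±1, let Ω ⊆ ℂ be open, and let (ψ₁, ψ₂) be a pair of continuously real-differentiable complex-valued functions solving the generalized Weierstrass–Enneper system ∂ψ₁ = p ψ₂, ∂̄ψ₂ = −p ψ₁ on Ω, where p = |ψ₁|² + |ψ₂|². If the first-order differential constraint ψ₁ ∂ψ̄₁ − ε ψ̄₁ ∂̄ψ₁ + ψ̄₂ ∂ψ₂ − ε ψ₂ ∂̄ψ̄₂ = 0 holds on Ω, then ∂p − ε ∂̄p = 0 on Ω; consequently p is a function of the single real variable s = z + ε z̄ alone (for ε = 1 it is independent of Im z, and for ε = −1 it is independent of Re z, along segments contained in Ω). -/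

import Mathlib

open Complex

/-- The Wirtinger derivative ∂f = (1/2)(∂f/∂x − i ∂f/∂y) of a real-differentiable
function `f : ℂ → ℂ`. -/
noncomputable def wD (f : ℂ → ℂ) (z : ℂ) : ℂ :=
  (1 / 2 : ℂ) * (fderiv ℝ f z 1 - Complex.I * fderiv ℝ f z Complex.I)

/-- The conjugate Wirtinger derivative ∂̄f = (1/2)(∂f/∂x + i ∂f/∂y). -/
noncomputable def wDbar (f : ℂ → ℂ) (z : ℂ) : ℂ :=
  (1 / 2 : ℂ) * (fderiv ℝ f z 1 + Complex.I * fderiv ℝ f z Complex.I)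

/-!
The system gives `ψ̄₁ ∂ψ₁ = p ψ̄₁ ψ₂` and, by conjugation, `ψ₂ ∂ψ̄₂ = -p ψ̄₁ ψ₂`, so these two terms
cancel in the product rule for `∂p` and leave `∂p = ψ₁ ∂ψ̄₁ + ψ̄₂ ∂ψ₂`. As `p` is real, `∂̄p` is the
conjugate `ψ̄₁ ∂̄ψ₁ + ψ₂ ∂̄ψ̄₂`. Hence the left-hand side of the constraint is `∂p - ε ∂̄p`.
If this vanishes, then `dp = ∂̄p (ε dz + dz̄)`, so `p` is constant along segments on which
`ε z + z̄` is; for `ε = ±1` this function is `ε (z + ε z̄)`.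
-/

open scoped ComplexConjugate

section Wirtinger

variable {f g : ℂ → ℂ} {z : ℂ}

lemma fderiv_conj_apply (f : ℂ → ℂ) (z d : ℂ) :
    fderiv ℝ (fun u => conj (f u)) z d = conj (fderiv ℝ f z d) :=
  congrArg (· d) (conjCLE.comp_fderiv (f := f) (x := z))

lemma wD_conj (f : ℂ → ℂ) (z : ℂ) : wD (fun u => conj (f u)) z = conj (wDbar f z) := by
  simp [wD, wDbar, fderiv_conj_apply, sub_eq_add_neg, map_ofNat (starRingEnd ℂ) 2]

lemma wDbar_conj (f : ℂ → ℂ) (z : ℂ) : wDbar (fun u => conj (f u)) z = conj (wD f z) := by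
  simp [wD, wDbar, fderiv_conj_apply, map_ofNat (starRingEnd ℂ) 2]

lemma wDbar_ofReal (p : ℂ → ℝ) (z : ℂ) :
    wDbar (fun u => (p u : ℂ)) z = conj (wD (fun u => (p u : ℂ)) z) := by
  simpa only [conj_ofReal] using wDbar_conj (fun u => (p u : ℂ)) z

lemma wD_add (hf : DifferentiableAt ℝ f z) (hg : DifferentiableAt ℝ g z) :
    wD (fun u => f u + g u) z = wD f z + wD g z := by
  simp only [wD, fderiv_fun_add hf hg, add_apply]
  ring

lemma wD_mul (hf : DifferentiableAt ℝ f z) (hg : DifferentiableAt ℝ g z) :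
    wD (fun u => f u * g u) z = f z * wD g z + g z * wD f z := by
  simp only [wD, fderiv_fun_mul hf hg, add_apply, smul_apply, smul_eq_mul]
  ring

lemma differentiableAt_normSq (hf : DifferentiableAt ℝ f z) :
    DifferentiableAt ℝ (fun u => (normSq (f u) : ℂ)) z := by
  have hconj : DifferentiableAt ℝ (fun u => conj (f u)) z := hf.star
  simpa only [mul_conj] using hf.fun_mul hconj

lemma wD_normSq (hf : DifferentiableAt ℝ f z) :
    wD (fun u => (normSq (f u) : ℂ)) z =
      f z * wD (fun u => conj (f u)) z + conj (f z) * wD f z := by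
  have hconj : DifferentiableAt ℝ (fun u => conj (f u)) z := hf.star
  simpa only [mul_conj] using wD_mul hf hconj

lemma fderiv_apply_eq_wD_add_wDbar (f : ℂ → ℂ) (z d : ℂ) :
    fderiv ℝ f z d = wD f z * d + wDbar f z * conj d := by
  have hd : fderiv ℝ f z d = d.re * fderiv ℝ f z 1 + d.im * fderiv ℝ f z I := by
    have hbasis : d = d.re • (1 : ℂ) + d.im • I := by simp
    conv_lhs => rw [hbasis]
    rw [map_add, map_smul, map_smul, real_smul, real_smul]
  rw [hd, wD, wDbar, re_eq_add_conj, im_eq_sub_conj]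
  field_simp
  linear_combination (d - conj d) * fderiv ℝ f z I * I_sq

end Wirtinger

lemma eq_of_hasLineDerivAt_zero_on_segment {E F : Type*} [AddCommGroup E] [Module ℝ E]
    [NormedAddCommGroup F] [NormedSpace ℝ F] {f : E → F} {x y : E}
    (hf : ∀ u ∈ segment ℝ x y, HasLineDerivAt ℝ f 0 u (y - x)) : f x = f y := by
  have hderiv : ∀ t ∈ Set.Icc (0 : ℝ) 1, HasDerivAt (fun s : ℝ => f (x + s • (y - x))) 0 t := by
    intro t ht
    have hmem : x + t • (y - x) ∈ segment ℝ x y := by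
      rw [segment_eq_image']
      exact Set.mem_image_of_mem _ ht
    have hzero : HasDerivAt (fun s : ℝ => f (x + t • (y - x) + s • (y - x))) 0 (t - t) := by
      rw [sub_self]
      exact hf _ hmem
    simpa only [add_assoc, ← add_smul, add_sub_cancel] using hzero.comp_sub_const t t
  have hconst := constant_of_has_deriv_right_zero
    (fun t ht => (hderiv t ht).continuousAt.continuousWithinAt)
    (fun t ht => (hderiv t (Set.Ico_subset_Icc_self ht)).hasDerivWithinAt)
    1 (Set.right_mem_Icc.2 zero_le_one)
  simpa using hconst.symm

lemma eq_of_wD_sub_mul_wDbar_eq_zero_on_segment {ε : ℂ} {f : ℂ → ℂ} {z w : ℂ}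
    (hf : ∀ u ∈ segment ℝ z w, DifferentiableAt ℝ f u)
    (hε : ∀ u ∈ segment ℝ z w, wD f u - ε * wDbar f u = 0)
    (hzw : ε * z + conj z = ε * w + conj w) : f z = f w := by
  refine eq_of_hasLineDerivAt_zero_on_segment fun u hu => ?_
  have hzero : fderiv ℝ f u (w - z) = 0 := by
    rw [fderiv_apply_eq_wD_add_wDbar, map_sub]
    linear_combination (w - z) * hε u hu - wDbar f u * hzw
  exact hzero ▸ (hf u hu).hasFDerivAt.hasLineDerivAt (w - z)

/-- The density `p = |ψ₁|² + |ψ₂|²`, the coefficient of the Weierstrass–Enneper system and the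
quantity conserved under the constraint. -/
def weDensity (ψ₁ ψ₂ : ℂ → ℂ) (z : ℂ) : ℝ :=
  normSq (ψ₁ z) + normSq (ψ₂ z)

/-- The pair `(ψ₁, ψ₂)` is differentiable at `z` and satisfies there the linear system
`∂ψ₁ = q ψ₂`, `∂̄ψ₂ = -q ψ₁`, with which `∂p` and `∂̄p` are computed. The Weierstrass–Enneper system
is the case `q = weDensity ψ₁ ψ₂ z`; a free real coefficient `q` makes the equations
linear in the pair. -/
structure IsWESolutionAt (q : ℝ) (ψ₁ ψ₂ : ℂ → ℂ) (z : ℂ) : Prop where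
  differentiableAt_fst : DifferentiableAt ℝ ψ₁ z
  differentiableAt_snd : DifferentiableAt ℝ ψ₂ z
  wD_fst : wD ψ₁ z = (q : ℂ) * ψ₂ z
  wDbar_snd : wDbar ψ₂ z = -(q : ℂ) * ψ₁ z

namespace IsWESolutionAt

variable {q : ℝ} {ψ₁ ψ₂ : ℂ → ℂ} {z : ℂ}

lemma differentiableAt_weDensity (h : IsWESolutionAt q ψ₁ ψ₂ z) :
    DifferentiableAt ℝ (fun u => (weDensity ψ₁ ψ₂ u : ℂ)) z := by
  simpa only [weDensity, ofReal_add] using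
    (differentiableAt_normSq h.differentiableAt_fst).fun_add
      (differentiableAt_normSq h.differentiableAt_snd)

lemma wD_weDensity (h : IsWESolutionAt q ψ₁ ψ₂ z) :
    wD (fun u => (weDensity ψ₁ ψ₂ u : ℂ)) z =
      ψ₁ z * wD (fun u => conj (ψ₁ u)) z + conj (ψ₂ z) * wD ψ₂ z := by
  have hconj : wD (fun u => conj (ψ₂ u)) z = -(q : ℂ) * conj (ψ₁ z) := by
    rw [wD_conj, h.wDbar_snd, map_mul, map_neg, conj_ofReal]
  simp only [weDensity, ofReal_add]
  rw [wD_add (differentiableAt_normSq h.differentiableAt_fst)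
      (differentiableAt_normSq h.differentiableAt_snd),
    wD_normSq h.differentiableAt_fst, wD_normSq h.differentiableAt_snd, h.wD_fst, hconj]
  ring

lemma wDbar_weDensity (h : IsWESolutionAt q ψ₁ ψ₂ z) :
    wDbar (fun u => (weDensity ψ₁ ψ₂ u : ℂ)) z =
      conj (ψ₁ z) * wDbar ψ₁ z + ψ₂ z * wDbar (fun u => conj (ψ₂ u)) z := by
  rw [wDbar_ofReal, h.wD_weDensity, wD_conj, wDbar_conj]
  simp only [map_add, map_mul, conj_conj]

end IsWESolutionAt

theorem WE_constraint_conserved_p_general {ε : ℂ} {Ω : Set ℂ} {q : ℂ → ℝ} {ψ₁ ψ₂ : ℂ → ℂ}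
    (hψ : ∀ z ∈ Ω, IsWESolutionAt (q z) ψ₁ ψ₂ z)
    (hconstraint : ∀ z ∈ Ω,
      ψ₁ z * wD (fun u => conj (ψ₁ u)) z - ε * conj (ψ₁ z) * wDbar ψ₁ z
        + conj (ψ₂ z) * wD ψ₂ z - ε * ψ₂ z * wDbar (fun u => conj (ψ₂ u)) z = 0) :
    (∀ z ∈ Ω, wD (fun u => (weDensity ψ₁ ψ₂ u : ℂ)) z
      - ε * wDbar (fun u => (weDensity ψ₁ ψ₂ u : ℂ)) z = 0) ∧
    ∀ z w, segment ℝ z w ⊆ Ω → ε * z + conj z = ε * w + conj w →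
      weDensity ψ₁ ψ₂ z = weDensity ψ₁ ψ₂ w := by
  have hp : ∀ z ∈ Ω, wD (fun u => (weDensity ψ₁ ψ₂ u : ℂ)) z
      - ε * wDbar (fun u => (weDensity ψ₁ ψ₂ u : ℂ)) z = 0 := by
    intro z hz
    rw [(hψ z hz).wD_weDensity, (hψ z hz).wDbar_weDensity]
    linear_combination hconstraint z hz
  refine ⟨hp, fun z w hΩ hzw => ofReal_injective ?_⟩
  exact eq_of_wD_sub_mul_wDbar_eq_zero_on_segment
    (fun u hu => (hψ u (hΩ hu)).differentiableAt_weDensity) (fun u hu => hp u (hΩ hu)) hzw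

/-- Proposition 5, conserved quantity: let ε = ±1 and let (ψ₁, ψ₂) be a
C¹ solution of the Weierstrass–Enneper system on the open set Ω satisfying the
differential constraint ψ₁ ∂ψ̄₁ − ε ψ̄₁ ∂̄ψ₁ + ψ̄₂ ∂ψ₂ − ε ψ₂ ∂̄ψ̄₂ = 0. Then
∂p − ε ∂̄p = 0 on Ω, where p = |ψ₁|² + |ψ₂|²; consequently p depends only on
s = z + ε z̄ along segments contained in Ω. -/
theorem WE_constraint_conserved_p
    (ε : ℝ) (hε : ε = 1 ∨ ε = -1)
    (Ω : Set ℂ) (hΩ : IsOpen Ω) (ψ₁ ψ₂ : ℂ → ℂ)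
    (hψ₁ : ContDiffOn ℝ 1 ψ₁ Ω) (hψ₂ : ContDiffOn ℝ 1 ψ₂ Ω)
    (hWE₁ : ∀ z ∈ Ω, wD ψ₁ z =
      ((Complex.normSq (ψ₁ z) + Complex.normSq (ψ₂ z) : ℝ) : ℂ) * ψ₂ z)
    (hWE₂ : ∀ z ∈ Ω, wDbar ψ₂ z =
      -((Complex.normSq (ψ₁ z) + Complex.normSq (ψ₂ z) : ℝ) : ℂ) * ψ₁ z)
    (hconstraint : ∀ z ∈ Ω,
      ψ₁ z * wD (fun u => (starRingEnd ℂ) (ψ₁ u)) z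
        - (ε : ℂ) * (starRingEnd ℂ) (ψ₁ z) * wDbar ψ₁ z
        + (starRingEnd ℂ) (ψ₂ z) * wD ψ₂ z
        - (ε : ℂ) * ψ₂ z * wDbar (fun u => (starRingEnd ℂ) (ψ₂ u)) z = 0) :
    (∀ z ∈ Ω,
      wD (fun w => ((Complex.normSq (ψ₁ w) + Complex.normSq (ψ₂ w) : ℝ) : ℂ)) z
        - (ε : ℂ) * wDbar (fun w => ((Complex.normSq (ψ₁ w) + Complex.normSq (ψ₂ w) : ℝ) : ℂ)) z
        = 0) ∧
    (∀ z ∈ Ω, ∀ w ∈ Ω, segment ℝ z w ⊆ Ω →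
      z + (ε : ℂ) * (starRingEnd ℂ) z = w + (ε : ℂ) * (starRingEnd ℂ) w →
      Complex.normSq (ψ₁ z) + Complex.normSq (ψ₂ z)
        = Complex.normSq (ψ₁ w) + Complex.normSq (ψ₂ w)) := by
  have hψ : ∀ z ∈ Ω, IsWESolutionAt (weDensity ψ₁ ψ₂ z) ψ₁ ψ₂ z := fun z hz =>
    ⟨(hψ₁.contDiffAt (hΩ.mem_nhds hz)).differentiableAt one_ne_zero,
      (hψ₂.contDiffAt (hΩ.mem_nhds hz)).differentiableAt one_ne_zero, hWE₁ z hz, hWE₂ z hz⟩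
  have hsq : (ε : ℂ) * ε = 1 := by rcases hε with rfl | rfl <;> simp
  obtain ⟨hp, hconst⟩ := WE_constraint_conserved_p_general hψ hconstraint
  refine ⟨hp, fun z _ w _ hzw hs => hconst z w hzw ?_⟩
  linear_combination (ε : ℂ) * hs - (conj z - conj w) * hsq
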